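/- Let Q be a linear system of quadrics on a finite-dimensional vector space V. Suppose the following condition (*) holds: letting B ⊂ P(V) be the base locus of Q and b := dim B, for every k ≤ b the subset W_k := { v ∈ B : the contraction map i_v: Q → V^* has rank ≤ k } has dimension < k. Then Q contains a smooth quadric. -/

import Mathlib

/-!
STATEMENT 17 (Voisin–Höring, Lemma 3.9):
Let `Q` be a linear system of quadrics on a finite-dimensional complex vector space
`V`.  Suppose the following condition (*) holds: letting `B ⊂ ℙ(V)` be the base locus
of `Q` and `b := dim B`, for every `k ≤ b` the subset
`W_k := { v ∈ B : the contraction map i_v : Q → V^* has rank ≤ k }` has dimension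
`< k`.  Then `Q` contains a smooth quadric (one whose associated symmetric bilinear
form is nondegenerate).

Here the dimension of a subset of `ℙ(V)` is its Zariski dimension: the Krull dimension
of the poset of irreducible Zariski-closed subsets of `ℙ(V)` contained in it, a
Zariski-closed subset of `ℙ(V)` being one whose affine cone is a common zero locus of
polynomial functions on `V`.
-/

open Module

noncomputable section

variable (V : Type) [AddCommGroup V] [Module ℂ V]

/-- The algebra of polynomial functions on `V`: the subalgebra of `V → ℂ` generated by
the linear forms. -/
def PolyFun : Subalgebra ℂ (V → ℂ) :=
  Algebra.adjoin ℂ (Set.range fun φ : Module.Dual ℂ V => (φ : V → ℂ))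

/-- A subset `A` of `ℙ(V)` is Zariski closed if its affine cone is the common zero
locus of a family of polynomial functions on `V`. -/
def IsZariskiClosed (A : Set (Projectivization ℂ V)) : Prop :=
  ∃ S : Set (V → ℂ), (∀ f ∈ S, f ∈ PolyFun V) ∧
    ∀ (v : V) (hv : v ≠ 0), (Projectivization.mk ℂ v hv ∈ A ↔ ∀ f ∈ S, f v = 0)

/-- The (Zariski) dimension of a subset `A ⊆ ℙ(V)`: the Krull dimension of the poset
(ordered by inclusion) of irreducible Zariski-closed subsets of `ℙ(V)` contained
in `A`. -/
def zariskiDim (A : Set (Projectivization ℂ V)) : WithBot ℕ∞ :=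
  Order.krullDim {Z : Set (Projectivization ℂ V) //
    IsZariskiClosed V Z ∧ Z.Nonempty ∧
    (∀ Z₁ Z₂ : Set (Projectivization ℂ V), IsZariskiClosed V Z₁ → IsZariskiClosed V Z₂ →
        Z ⊆ Z₁ ∪ Z₂ → Z ⊆ Z₁ ∨ Z ⊆ Z₂) ∧ Z ⊆ A}

/-- The base locus `B ⊂ ℙ(V)` of a linear system of quadrics `Q` on `V`: the set of
points where all members of `Q` vanish. -/
def baseLocus (Q : Submodule ℂ (QuadraticForm ℂ V)) : Set (Projectivization ℂ V) :=
  {x | ∀ q ∈ Q, q x.rep = 0}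

/-- The rank of the contraction map `i_v : Q → V^*`, `q ↦ q(v, ·)` (contraction with
the polar bilinear form of `q`): the rank of its image in `V^*`. -/
def contractionRank (Q : Submodule ℂ (QuadraticForm ℂ V)) (v : V) : Cardinal :=
  Module.rank ℂ ↥(Submodule.span ℂ
    (Set.range fun q : Q => QuadraticMap.polarBilin (q : QuadraticForm ℂ V) v))

/-- The subset `W_k ⊆ B` of points `v` of the base locus where the contraction map
`i_v : Q → V^*` has rank `≤ k`. -/
def Wset (Q : Submodule ℂ (QuadraticForm ℂ V)) (k : ℕ) :
    Set (Projectivization ℂ V) :=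
  {x ∈ baseLocus V Q | contractionRank V Q x.rep ≤ (k : Cardinal)}

/-!
Suppose every member of `Q` is degenerate. Take `r` to be the largest rank of a member of `Q`; all
minors of size `r + 1` vanish on `Q`, so Cramer's rule applied to the minors of size `r` produces a
nonzero polynomial map `φ : Q → V` with `q (φ q, ·) = 0` for every `q`. Differentiating this
identity in the direction of `h ∈ Q` shows two things. Pairing with `φ q` gives `h (φ q) = 0`, so
`φ` takes values in the base locus. Moreover the derivative of `φ` at `q` in the direction of `h`
is sent by `q` to `-h (φ q, ·)`, so the image of `φ` in `ℙ(V)` has dimension at least the rank `k`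
of `i_{φ q}`. Choosing `q` with `k` maximal, this image lies in `W_k`, against condition (*).

For the dimension as a length of chains: a polynomial map on `ℂ^k` that induces an immersion into
`ℙ(V)` at `0` sends a flag of subspaces to a chain of irreducible closed sets. The chain is strict
because the cone over the image of a subspace `U` maps dominantly onto an affine space of dimension
`dim U + 1`, and a dominant map cannot raise the transcendence degree.
-/

open Set Filter Topology

section LinearAlgebra

theorem surjective_pi_of_linearIndependent {ι K M : Type*} [Finite ι] [Field K] [AddCommGroup M]
    [Module K M] {f : ι → Dual K M} (hf : LinearIndependent K f) :
    Function.Surjective (LinearMap.pi f) := by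
  have hfun : LinearIndependent K fun i => (f i : M → K) :=
    hf.map' (LinearMap.ltoFun K M K K) (LinearMap.ker_eq_bot.2 DFunLike.coe_injective)
  rw [← LinearMap.range_eq_top, ← Submodule.span_eq (LinearMap.pi f).range, LinearMap.coe_range]
  exact span_flip_eq_top_iff_linearIndependent.2 hfun

theorem natCast_le_rank_iff_exists_linearIndependent {K U M : Type*} [Field K] [AddCommGroup U]
    [Module K U] [AddCommGroup M] [Module K M] (T : U →ₗ[K] M) (n : ℕ) :
    (n : Cardinal) ≤ T.rank ↔ ∃ u : Fin n → U, LinearIndependent K (T ∘ u) := by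
  rw [LinearMap.rank, natCast_le_rank_iff]
  constructor
  · rintro ⟨f, hf⟩
    choose u hu using fun i => T.surjective_rangeRestrict (f i)
    obtain rfl : T.rangeRestrict ∘ u = f := funext hu
    exact ⟨u, hf.map' T.range.subtype (Submodule.ker_subtype _)⟩
  · rintro ⟨u, hu⟩
    exact ⟨T.rangeRestrict ∘ u, LinearIndependent.of_comp T.range.subtype hu⟩

theorem natCast_le_rank_iff_exists_det_ne_zero {K U M : Type*} [Field K] [AddCommGroup U]
    [Module K U] [AddCommGroup M] [Module K M] (T : U →ₗ[K] Dual K M) (n : ℕ) :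
    (n : Cardinal) ≤ T.rank ↔
      ∃ (u : Fin n → U) (e : Fin n → M), (LinearMap.toMatrix₂Aux K u e T).det ≠ 0 := by
  rw [natCast_le_rank_iff_exists_linearIndependent]
  refine exists_congr fun u => ⟨fun hTu => ?_, fun ⟨e, hdet⟩ => ?_⟩
  · choose e he using fun j => surjective_pi_of_linearIndependent hTu (Pi.single j 1)
    have hone : LinearMap.toMatrix₂Aux K u e T = 1 := by
      ext i j
      simpa [Matrix.one_apply, Pi.single_apply] using congrFun (he j) i
    exact ⟨e, by simp [hone]⟩
  · let evalAt : Dual K M →ₗ[K] (Fin n → K) := LinearMap.pi fun j => LinearMap.applyₗ (e j)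
    exact LinearIndependent.of_comp evalAt (Matrix.linearIndependent_rows_of_det_ne_zero hdet)

theorem rank_le_natCast_iff_forall_det_eq_zero {K U M : Type*} [Field K] [AddCommGroup U]
    [Module K U] [AddCommGroup M] [Module K M] (T : U →ₗ[K] Dual K M) (n : ℕ) :
    T.rank ≤ n ↔ ∀ (u : Fin (n + 1) → U) (e : Fin (n + 1) → M),
      (LinearMap.toMatrix₂Aux K u e T).det = 0 := by
  rw [← not_lt, ← Order.succ_le_iff, Cardinal.succ_natCast, ← Nat.cast_succ,
    natCast_le_rank_iff_exists_det_ne_zero]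
  push Not
  rfl

theorem exists_rank_eq_natCast_forall_rank_le {ι K U M : Type*} [Nonempty ι] [Field K]
    [AddCommGroup U] [Module K U] [AddCommGroup M] [Module K M] [FiniteDimensional K M]
    (T : ι → U →ₗ[K] M) : ∃ (i : ι) (r : ℕ), (T i).rank = r ∧ ∀ j, (T j).rank ≤ r := by
  have hbdd : BddAbove (range fun i => finrank K (T i).range) :=
    ⟨finrank K M, by rintro _ ⟨i, rfl⟩; exact Submodule.finrank_le _⟩
  obtain ⟨_, ⟨i, rfl⟩, hmax⟩ := hbdd.exists_isGreatest_of_nonempty (range_nonempty _)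
  refine ⟨i, _, (finrank_eq_rank K _).symm, fun j => ?_⟩
  rw [LinearMap.rank, ← finrank_eq_rank]
  exact_mod_cast hmax (mem_range_self j)

variable {R M N : Type*} [CommRing R] [AddCommGroup M] [Module R M] [AddCommGroup N] [Module R N]

/-- The combination of the vectors `b i` whose coefficients are the signed maximal minors of the
matrix `B (b i) (c j)`, as in Cramer's rule. Pairing it with `w` gives the determinant of the matrix
bordered by the column `B (b i) w`. -/
def cramerVector (B : M →ₗ[R] N →ₗ[R] R) {n : ℕ} (b : Fin (n + 1) → M) (c : Fin n → N) : M :=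
  ∑ i : Fin (n + 1), ((-1) ^ (i : ℕ) * (LinearMap.toMatrix₂Aux R (b ∘ i.succAbove) c B).det) • b i

theorem apply_cramerVector (B : M →ₗ[R] N →ₗ[R] R) {n : ℕ} (b : Fin (n + 1) → M) (c : Fin n → N)
    (w : N) :
    B (cramerVector B b c) w =
      (LinearMap.toMatrix₂Aux R b (Fin.cons w c : Fin (n + 1) → N) B).det := by
  rw [Matrix.det_succ_column_zero, cramerVector, map_sum, LinearMap.sum_apply]
  refine Finset.sum_congr rfl fun i _ => ?_
  have hminor : (LinearMap.toMatrix₂Aux R b (Fin.cons w c : Fin (n + 1) → N) B).submatrix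
      i.succAbove Fin.succ = LinearMap.toMatrix₂Aux R (b ∘ i.succAbove) c B := rfl
  rw [hminor]
  simp [LinearMap.toMatrix₂Aux_apply, mul_right_comm]

theorem cramerVector_cons_of_apply_eq_zero (B : M →ₗ[R] N →ₗ[R] R) {n : ℕ} {v : M}
    (hv : B v = 0) (b : Fin n → M) (c : Fin n → N) :
    cramerVector B (Fin.cons v b : Fin (n + 1) → M) c =
      (LinearMap.toMatrix₂Aux R b c B).det • v := by
  rw [cramerVector, Fin.sum_univ_succ, Finset.sum_eq_zero, add_zero]
  · simp [Function.comp_def]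
  · rintro i -
    cases n with
    | zero => exact i.elim0
    | succ n =>
      rw [Matrix.det_eq_zero_of_row_eq_zero 0, mul_zero, zero_smul]
      simp [LinearMap.toMatrix₂Aux_apply, hv]

/-- The polar form, as a linear function of the quadratic form. -/
def polarBilinHom : QuadraticForm R M →ₗ[R] M →ₗ[R] Dual R M where
  toFun q := q.polarBilin
  map_add' q q' := by ext v w; exact QuadraticMap.polar_add q q' v w
  map_smul' a q := by ext v w; exact QuadraticMap.polar_smul q a v w

theorem polarBilinHom_isSymm (q : QuadraticForm R M) :
    LinearMap.BilinForm.IsSymm (polarBilinHom q) :=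
  ⟨fun v w => QuadraticMap.polar_comm q v w⟩

end LinearAlgebra

section PolynomialFunctions

variable {V} {W X : Type} [AddCommGroup W] [Module ℂ W] [AddCommGroup X] [Module ℂ X]

theorem dual_mem_polyFun (ℓ : Dual ℂ V) : (ℓ : V → ℂ) ∈ PolyFun V :=
  Algebra.subset_adjoin (mem_range_self ℓ)

/-- A map between vector spaces is polynomial if its composites with all linear forms are polynomial
functions. -/
def IsPolyMap (φ : W → V) : Prop :=
  ∀ ℓ : Dual ℂ V, (fun x => ℓ (φ x)) ∈ PolyFun W

theorem IsPolyMap.comp_mem {φ : W → V} (hφ : IsPolyMap φ) {f : V → ℂ} (hf : f ∈ PolyFun V) :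
    f ∘ φ ∈ PolyFun W := by
  induction hf using Algebra.adjoin_induction with
  | mem f hf =>
    obtain ⟨ℓ, rfl⟩ := hf
    exact hφ ℓ
  | algebraMap a => exact (PolyFun W).algebraMap_mem a
  | add f g _ _ hf hg => exact (PolyFun W).add_mem hf hg
  | mul f g _ _ hf hg => exact (PolyFun W).mul_mem hf hg

theorem IsPolyMap.comp {φ : W → V} {ψ : X → W} (hφ : IsPolyMap φ) (hψ : IsPolyMap ψ) :
    IsPolyMap (φ ∘ ψ) :=
  fun ℓ => hψ.comp_mem (hφ ℓ)

theorem isPolyMap_linearMap (T : W →ₗ[ℂ] V) : IsPolyMap T :=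
  fun ℓ => dual_mem_polyFun (ℓ ∘ₗ T)

theorem isPolyMap_const (v : V) : IsPolyMap fun _ : W => v :=
  fun ℓ => (PolyFun W).algebraMap_mem (ℓ v)

theorem IsPolyMap.add {φ ψ : W → V} (hφ : IsPolyMap φ) (hψ : IsPolyMap ψ) :
    IsPolyMap fun x => φ x + ψ x := fun ℓ => by
  simpa only [map_add] using! (PolyFun W).add_mem (hφ ℓ) (hψ ℓ)

theorem IsPolyMap.smul {f : W → ℂ} {φ : W → V} (hf : f ∈ PolyFun W) (hφ : IsPolyMap φ) :
    IsPolyMap fun x => f x • φ x := fun ℓ => by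
  simpa only [map_smul] using! (PolyFun W).mul_mem hf (hφ ℓ)

theorem IsPolyMap.sum {ι : Type*} (s : Finset ι) {φ : ι → W → V} (hφ : ∀ i, IsPolyMap (φ i)) :
    IsPolyMap fun x => ∑ i ∈ s, φ i x := fun ℓ => by
  convert (PolyFun W).sum_mem fun i (_ : i ∈ s) => hφ i ℓ using 1
  ext x
  simp

theorem det_mem_polyFun {ι : Type*} [Fintype ι] [DecidableEq ι] {m : W → Matrix ι ι ℂ}
    (hm : ∀ i j, (fun x => m x i j) ∈ PolyFun W) : (fun x => (m x).det) ∈ PolyFun W := by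
  simp only [Matrix.det_apply]
  convert (PolyFun W).sum_mem fun (σ : Equiv.Perm ι) (_ : σ ∈ Finset.univ) =>
    (PolyFun W).zsmul_mem ((PolyFun W).prod_mem fun i (_ : i ∈ Finset.univ) => hm (σ i) i)
      (Equiv.Perm.sign σ) using 1
  ext x
  simp [Finset.sum_apply, Finset.prod_apply, Units.smul_def]

theorem det_toMatrix₂Aux_mem_polyFun {U M : Type*} [AddCommGroup U] [Module ℂ U] [AddCommGroup M]
    [Module ℂ M] (T : W →ₗ[ℂ] U →ₗ[ℂ] Dual ℂ M) {n : ℕ} (u : Fin n → U) (e : Fin n → M) :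
    (fun x => (LinearMap.toMatrix₂Aux ℂ u e (T x)).det) ∈ PolyFun W :=
  det_mem_polyFun fun i j => dual_mem_polyFun
    (LinearMap.applyₗ (e j) ∘ₗ LinearMap.applyₗ (u i) ∘ₗ T)

theorem bilin_apply_self_mem_polyFun [FiniteDimensional ℂ V] (B : LinearMap.BilinForm ℂ V) :
    (fun v => B v v) ∈ PolyFun V := by
  let b := finBasis ℂ V
  have hB : (fun v => B v v) = ∑ i, (b.coord i : V → ℂ) * (B (b i) : V → ℂ) := by
    ext v
    nth_rw 1 [← b.sum_repr v]
    simp [-Basis.sum_repr]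
  rw [hB]
  exact sum_mem fun i _ => mul_mem (dual_mem_polyFun _) (dual_mem_polyFun _)

theorem exists_polynomial_eval_eq {f : ℂ → ℂ} (hf : f ∈ PolyFun ℂ) :
    ∃ P : Polynomial ℂ, ∀ t, f t = P.eval t := by
  induction hf using Algebra.adjoin_induction with
  | mem f hf =>
    obtain ⟨ℓ, rfl⟩ := hf
    refine ⟨.X * .C (ℓ 1), fun t => ?_⟩
    rw [Polynomial.eval_mul, Polynomial.eval_X, Polynomial.eval_C, ← smul_eq_mul, ← map_smul,
      smul_eq_mul, mul_one]
  | algebraMap a => exact ⟨.C a, fun t => by simp⟩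
  | add f g _ _ hf hg =>
    obtain ⟨⟨P, hP⟩, R, hR⟩ := And.intro hf hg
    exact ⟨P + R, fun t => by simp [hP, hR]⟩
  | mul f g _ _ hf hg =>
    obtain ⟨⟨P, hP⟩, R, hR⟩ := And.intro hf hg
    exact ⟨P * R, fun t => by simp [hP, hR]⟩

theorem isPolyMap_line (x w : V) : IsPolyMap fun t : ℂ => x + t • w :=
  (isPolyMap_const x).add (.smul (dual_mem_polyFun LinearMap.id) (isPolyMap_const w))

theorem exists_ne_zero_and_ne_zero {f g : V → ℂ} (hf : f ∈ PolyFun V) (hg : g ∈ PolyFun V) {x y : V}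
    (hx : f x ≠ 0) (hy : g y ≠ 0) : ∃ z, f z ≠ 0 ∧ g z ≠ 0 := by
  have hline := isPolyMap_line x (y - x)
  obtain ⟨P, hP⟩ := exists_polynomial_eval_eq (hline.comp_mem hf)
  obtain ⟨R, hR⟩ := exists_polynomial_eval_eq (hline.comp_mem hg)
  have hP0 : P ≠ 0 := by
    rintro rfl
    exact hx (by simpa using hP 0)
  have hR0 : R ≠ 0 := by
    rintro rfl
    exact hy (by simpa using hR 1)
  obtain ⟨t, ht⟩ : ∃ t, (P * R).eval t ≠ 0 := by
    by_contra! h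
    exact mul_ne_zero hP0 hR0 (Polynomial.funext (by simpa using h))
  rw [Polynomial.eval_mul, ← hP, ← hR] at ht
  exact ⟨_, ne_zero_and_ne_zero_of_mul ht⟩

section Analysis

variable {E : Type} [NormedAddCommGroup E] [NormedSpace ℂ E]

theorem eq_zero_of_mem_polyFun_of_eventuallyEq {f : E → ℂ} (hf : f ∈ PolyFun E) {a : E}
    (ha : f =ᶠ[𝓝 a] 0) : f = 0 := by
  ext x
  obtain ⟨P, hP⟩ := exists_polynomial_eval_eq ((isPolyMap_line a (x - a)).comp_mem hf)
  have hline : Tendsto (fun t : ℂ => a + t • (x - a)) (𝓝 0) (𝓝 a) :=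
    Continuous.tendsto' (by fun_prop) _ _ (by simp)
  have hroots : {t | P.IsRoot t} ∈ 𝓝 (0 : ℂ) :=
    (hline.eventually ha).mono fun t ht => (hP t).symm.trans ht
  have hP0 : P = 0 := P.eq_zero_of_infinite_isRoot (infinite_of_mem_nhds 0 hroots)
  simpa [hP0] using hP 1

variable [FiniteDimensional ℂ E]

theorem contDiff_of_mem_polyFun {f : E → ℂ} (hf : f ∈ PolyFun E) : ContDiff ℂ 1 f := by
  induction hf using Algebra.adjoin_induction with
  | mem f hf =>
    obtain ⟨ℓ, rfl⟩ := hf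
    exact (LinearMap.toContinuousLinearMap ℓ).contDiff
  | algebraMap a => exact contDiff_const
  | add f g _ _ hf hg => exact hf.add hg
  | mul f g _ _ hf hg => exact hf.mul hg

theorem IsPolyMap.contDiff {F : Type} [NormedAddCommGroup F] [NormedSpace ℂ F]
    [FiniteDimensional ℂ F] {φ : E → F} (hφ : IsPolyMap φ) : ContDiff ℂ 1 φ := by
  refine (finBasis ℂ F).equivFunL.comp_contDiff_iff.1 (contDiff_pi.2 fun i => ?_)
  exact contDiff_of_mem_polyFun (hφ ((finBasis ℂ F).coord i))

end Analysis

theorem trdeg_polyFun [FiniteDimensional ℂ V] :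
    Algebra.trdeg ℂ (PolyFun V) = finrank ℂ V := by
  let b := finBasis ℂ V
  let coords : Fin (finrank ℂ V) → V → ℂ := fun i v => b.repr v i
  have heval (P : MvPolynomial (Fin (finrank ℂ V)) ℂ) (v : V) :
      MvPolynomial.aeval coords P v = MvPolynomial.eval (b.repr v) P :=
    (MvPolynomial.comp_aeval_apply coords (Pi.evalAlgHom ℂ _ v) P).trans
      (congrArg (· P) (MvPolynomial.coe_aeval_eq_eval (b.repr v)))
  have hinj : Function.Injective (MvPolynomial.aeval (R := ℂ) coords) := fun P R hPR =>
    MvPolynomial.funext fun x => by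
      obtain ⟨v, rfl⟩ := b.equivFun.surjective x
      exact (heval P v).symm.trans ((congrFun hPR v).trans (heval R v))
  have hrange : (MvPolynomial.aeval (R := ℂ) coords).range = PolyFun V := by
    rw [← Algebra.adjoin_range_eq_range_aeval]
    refine le_antisymm (Algebra.adjoin_le ?_) (Algebra.adjoin_le ?_)
    · rintro _ ⟨i, rfl⟩
      exact dual_mem_polyFun (b.coord i)
    · rintro _ ⟨ℓ, rfl⟩
      have hℓ : (ℓ : V → ℂ) = ∑ i, ℓ (b i) • coords i := by
        ext v
        simpa [coords, -Basis.sum_dual_apply_smul_coord] using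
          LinearMap.congr_fun (b.sum_dual_apply_smul_coord ℓ).symm v
      beta_reduce
      rw [hℓ]
      exact sum_mem fun i _ => Subalgebra.smul_mem _ (Algebra.subset_adjoin (mem_range_self i)) _
  let e := (AlgEquiv.ofInjective _ hinj).trans (Subalgebra.equivOfEq _ _ hrange)
  rw [← e.trdeg_eq, MvPolynomial.trdeg_of_isDomain]
  simp

/-- A map is dominant if no nonzero polynomial function vanishes on its image, i.e. if its image is
Zariski dense. -/
def IsDominant (θ : W → V) : Prop :=
  ∀ f ∈ PolyFun V, (∀ x, f (θ x) = 0) → f = 0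

theorem IsDominant.finrank_le [FiniteDimensional ℂ V] [FiniteDimensional ℂ W] {θ : W → V}
    (hdom : IsDominant θ) (hθ : IsPolyMap θ) : finrank ℂ V ≤ finrank ℂ W := by
  let pullback : PolyFun V →ₐ[ℂ] PolyFun W :=
    ((AlgHom.pi fun x => Pi.evalAlgHom ℂ (fun _ => ℂ) (θ x)).comp (PolyFun V).val).codRestrict
      (PolyFun W) fun f => hθ.comp_mem f.2
  have hinj : Function.Injective pullback := (injective_iff_map_eq_zero _).2 fun f hf =>
    Subtype.ext (hdom f f.2 fun x => congrFun (congrArg Subtype.val hf) x)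
  have := trdeg_le_of_injective pullback hinj
  rw [trdeg_polyFun, trdeg_polyFun] at this
  exact_mod_cast this

theorem isDominant_of_hasStrictFDerivAt {E F : Type} [NormedAddCommGroup E] [NormedSpace ℂ E]
    [CompleteSpace E] [NormedAddCommGroup F] [NormedSpace ℂ F] [CompleteSpace F]
    {θ : E → F} {θ' : E →L[ℂ] F} {a : E} (hθ : HasStrictFDerivAt θ θ' a) (hsurj : θ'.range = ⊤) :
    IsDominant θ := fun f hf hzero =>
  eq_zero_of_mem_polyFun_of_eventuallyEq hf <| by
    rw [← hθ.map_nhds_eq_of_surj hsurj]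
    exact eventually_map.2 (Eventually.of_forall hzero)

end PolynomialFunctions

section ProjectiveClosure

variable {V}

/-- The Zariski closure in `ℙ(V)` of the points spanned by the nonzero vectors of `S`: the points at
which every polynomial function vanishing on the cone over `S` vanishes. -/
def projClosure (S : Set V) : Set (Projectivization ℂ V) :=
  {p | ∀ f ∈ PolyFun V, (∀ v ∈ S, ∀ t : ℂ, f (t • v) = 0) → f p.rep = 0}

theorem mk_mem_projClosure_iff {S : Set V} {v : V} (hv : v ≠ 0) :
    Projectivization.mk ℂ v hv ∈ projClosure S ↔
      ∀ f ∈ PolyFun V, (∀ w ∈ S, ∀ t : ℂ, f (t • w) = 0) → f v = 0 := by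
  obtain ⟨a, ha⟩ := Projectivization.exists_smul_eq_mk_rep ℂ v hv
  have hscale (c : ℂ) : IsPolyMap fun w : V => c • w := isPolyMap_linearMap (LinearMap.lsmul ℂ V c)
  constructor
  · intro h f hf hzero
    have := h _ ((hscale ↑a⁻¹).comp_mem hf) fun w hw t => by
      simpa [smul_smul] using hzero w hw (↑a⁻¹ * t)
    simpa [← ha, Units.smul_def, smul_smul] using this
  · intro h f hf hzero
    have := h _ ((hscale a).comp_mem hf) fun w hw t => by
      simpa [smul_smul] using hzero w hw (↑a * t)
    simpa [← ha, Units.smul_def] using this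

theorem mk_mem_projClosure {S : Set V} {v : V} (hv : v ≠ 0) (hvS : v ∈ S) :
    Projectivization.mk ℂ v hv ∈ projClosure S :=
  (mk_mem_projClosure_iff hv).2 fun f _ hzero => by simpa using hzero v hvS 1

theorem isZariskiClosed_projClosure (S : Set V) : IsZariskiClosed V (projClosure S) :=
  ⟨{f ∈ PolyFun V | ∀ v ∈ S, ∀ t : ℂ, f (t • v) = 0}, fun _ hf => hf.1, fun v hv => by
    simp [mk_mem_projClosure_iff hv]⟩

theorem projClosure_mono {S T : Set V} (h : S ⊆ T) : projClosure S ⊆ projClosure T :=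
  fun _ hp f hf hzero => hp f hf fun v hv => hzero v (h hv)

theorem zariskiDim_mono {A B : Set (Projectivization ℂ V)} (h : A ⊆ B) :
    zariskiDim V A ≤ zariskiDim V B :=
  Order.krullDim_le_of_strictMono
    (fun Z => ⟨Z.1, Z.2.1, Z.2.2.1, Z.2.2.2.1, Z.2.2.2.2.trans h⟩) fun _ _ hlt => hlt

variable {W : Type}

/-- The parametrization of the cone over the image of `φ`. -/
def coneMap (φ : W → V) : ℂ × W → V := fun z => z.1 • φ z.2

theorem mk_coneMap_mem_projClosure (φ : W → V) {z : ℂ × W} (hz : coneMap φ z ≠ 0) :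
    Projectivization.mk ℂ _ hz ∈ projClosure (range φ) :=
  (mk_mem_projClosure_iff hz).2 fun _ _ hzero => hzero _ (mem_range_self z.2) z.1

theorem exists_apply_coneMap_ne_zero {φ : W → V} {v : V} (hv : v ≠ 0)
    (hmem : Projectivization.mk ℂ v hv ∈ projClosure (range φ)) {f : V → ℂ} (hf : f ∈ PolyFun V)
    (hfv : f v ≠ 0) : ∃ z, f (coneMap φ z) ≠ 0 := by
  by_contra! hzero
  exact hfv ((mk_mem_projClosure_iff hv).1 hmem f hf (forall_mem_range.2 fun x t => hzero (t, x)))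

theorem isDominant_comp_coneMap_of_projClosure_subset [Nonempty W] {X U : Type} [AddCommGroup U]
    [Module ℂ U] {φ : W → V} {ψ : X → V} {M : V →ₗ[ℂ] U}
    (hsub : projClosure (range ψ) ⊆ projClosure (range φ))
    (hdom : IsDominant (M ∘ coneMap ψ)) : IsDominant (M ∘ coneMap φ) := by
  intro f hf hzero
  refine hdom f hf fun z => ?_
  have hfM : f ∘ M ∈ PolyFun V := (isPolyMap_linearMap M).comp_mem hf
  have hcone : ∀ v ∈ range φ, ∀ t : ℂ, (f ∘ M) (t • v) = 0 := by
    rintro _ ⟨x, rfl⟩ t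
    exact hzero (t, x)
  obtain hz | hz := eq_or_ne (coneMap ψ z) 0
  · rw [Function.comp_apply, hz, map_zero]
    simpa [coneMap] using hzero (0, Classical.arbitrary W)
  · exact (mk_mem_projClosure_iff hz).1 (hsub (mk_coneMap_mem_projClosure ψ hz)) _ hfM hcone

variable [AddCommGroup W] [Module ℂ W]

theorem IsPolyMap.coneMap {φ : W → V} (hφ : IsPolyMap φ) : IsPolyMap (coneMap φ) :=
  .smul (dual_mem_polyFun (LinearMap.fst ℂ ℂ W)) (hφ.comp (isPolyMap_linearMap (.snd ℂ ℂ W)))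

theorem projClosure_range_subset_or_subset {φ : W → V} (hφ : IsPolyMap φ)
    {Z₁ Z₂ : Set (Projectivization ℂ V)} (hZ₁ : IsZariskiClosed V Z₁) (hZ₂ : IsZariskiClosed V Z₂)
    (hcover : projClosure (range φ) ⊆ Z₁ ∪ Z₂) :
    projClosure (range φ) ⊆ Z₁ ∨ projClosure (range φ) ⊆ Z₂ := by
  by_contra! ⟨h₁, h₂⟩
  obtain ⟨⟨p₁, hp₁, hpZ₁⟩, p₂, hp₂, hpZ₂⟩ := And.intro (not_subset.1 h₁) (not_subset.1 h₂)
  induction p₁ with | h v₁ hv₁ =>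
  induction p₂ with | h v₂ hv₂ =>
  obtain ⟨⟨S₁, hS₁, hmem₁⟩, S₂, hS₂, hmem₂⟩ := And.intro hZ₁ hZ₂
  simp only [hmem₁, hmem₂, not_forall] at hpZ₁ hpZ₂
  obtain ⟨⟨f₁, hf₁, hfv₁⟩, f₂, hf₂, hfv₂⟩ := And.intro hpZ₁ hpZ₂
  obtain ⟨ℓ, hℓ⟩ : ∃ ℓ : Dual ℂ V, ℓ v₁ ≠ 0 := by
    by_contra! h
    exact hv₁ ((forall_dual_apply_eq_zero_iff ℂ v₁).1 h)
  obtain ⟨_, hz₁⟩ := exists_apply_coneMap_ne_zero hv₁ hp₁ (hS₁ f₁ hf₁) hfv₁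
  obtain ⟨_, hz₂⟩ := exists_apply_coneMap_ne_zero hv₂ hp₂ (hS₂ f₂ hf₂) hfv₂
  obtain ⟨_, hzℓ⟩ := exists_apply_coneMap_ne_zero hv₁ hp₁ (dual_mem_polyFun ℓ) hℓ
  have hmem {f : V → ℂ} (hf : f ∈ PolyFun V) : f ∘ coneMap φ ∈ PolyFun (ℂ × W) :=
    hφ.coneMap.comp_mem hf
  obtain ⟨_, hz⟩ := exists_ne_zero_and_ne_zero (hmem (hS₁ f₁ hf₁)) (hmem (hS₂ f₂ hf₂)) hz₁ hz₂
  obtain ⟨z, hz, hzℓ⟩ := exists_ne_zero_and_ne_zero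
    ((PolyFun _).mul_mem (hmem (hS₁ f₁ hf₁)) (hmem (hS₂ f₂ hf₂))) (hmem (dual_mem_polyFun ℓ))
    (mul_ne_zero hz.1 hz.2) hzℓ
  have hne : coneMap φ z ≠ 0 := fun h => hzℓ (by simp [h])
  obtain ⟨hfz₁, hfz₂⟩ := ne_zero_and_ne_zero_of_mul hz
  rcases hcover (mk_coneMap_mem_projClosure φ hne) with h | h
  · exact hfz₁ ((hmem₁ _ hne).1 h f₁ hf₁)
  · exact hfz₂ ((hmem₂ _ hne).1 h f₂ hf₂)

end ProjectiveClosure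

section ProjectiveImmersion

variable {V} {E : Type} [NormedAddCommGroup E] [NormedSpace ℂ E]

/-- The map `E → ℙ(V)` induced by `φ` is an immersion at `0`: the vector `φ 0` is nonzero and some
linear map `D` killing it, hence defined on the tangent space of `ℙ(V)` at that point, is a left
inverse of the derivative of `φ`. -/
def IsProjImmersionAtZero (φ : E → V) : Prop :=
  ∃ (ℓ : Dual ℂ V) (D : V →ₗ[ℂ] E), ℓ (φ 0) ≠ 0 ∧ D (φ 0) = 0 ∧
    HasStrictFDerivAt (fun x => D (φ x)) (ContinuousLinearMap.id ℂ E) 0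

variable [FiniteDimensional ℂ E]

theorem IsProjImmersionAtZero.comp_subtype {φ : E → V} (hφ : IsProjImmersionAtZero φ)
    (U : Submodule ℂ E) : IsProjImmersionAtZero (φ ∘ U.subtype) := by
  obtain ⟨ℓ, D, hℓ, hD, hderiv⟩ := hφ
  obtain ⟨P, hP⟩ := U.subtype.exists_leftInverse_of_injective U.ker_subtype
  refine ⟨ℓ, P ∘ₗ D, by simpa using hℓ, by simp [hD], ?_⟩
  have hinner := HasStrictFDerivAt.comp (0 : U) hderiv U.subtypeL.hasStrictFDerivAt
  have hcomp := (LinearMap.toContinuousLinearMap P).hasStrictFDerivAt.comp (0 : U) hinner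
  exact hcomp.congr_fderiv (ContinuousLinearMap.ext fun x => LinearMap.congr_fun hP x)

theorem IsProjImmersionAtZero.exists_isDominant {φ : E → V} (himm : IsProjImmersionAtZero φ)
    (hφ : IsPolyMap φ) : ∃ M : V →ₗ[ℂ] ℂ × E, IsDominant (M ∘ coneMap φ) := by
  obtain ⟨ℓ, D, hℓ, hD, hderivD⟩ := himm
  obtain ⟨ℓ', hderivℓ⟩ : ∃ ℓ', HasStrictFDerivAt (fun x => ℓ (φ x)) ℓ' 0 :=
    ⟨_, (contDiff_of_mem_polyFun (hφ ℓ)).contDiffAt.hasStrictFDerivAt one_ne_zero⟩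
  have hfst := hasStrictFDerivAt_fst (𝕜 := ℂ) (p := ((1, 0) : ℂ × E))
  have hsnd := hasStrictFDerivAt_snd (𝕜 := ℂ) (p := ((1, 0) : ℂ × E))
  have hderiv := (hfst.fun_smul (hderivℓ.comp ((1, 0) : ℂ × E) hsnd)).prodMk
    (hfst.fun_smul (hderivD.comp ((1, 0) : ℂ × E) hsnd))
  refine ⟨ℓ.prod D, ?_⟩
  have hθ : ⇑(ℓ.prod D) ∘ coneMap φ = fun z => (z.1 • ℓ (φ z.2), z.1 • D (φ z.2)) := by
    ext z <;> simp [coneMap]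
  rw [hθ]
  refine isDominant_of_hasStrictFDerivAt hderiv (LinearMap.range_eq_top.2 ?_)
  rintro ⟨c, e⟩
  refine ⟨((c - ℓ' e) / ℓ (φ 0), e), ?_⟩
  simp [hD, hℓ]

theorem IsProjImmersionAtZero.finrank_le_zariskiDim {φ : E → V} (himm : IsProjImmersionAtZero φ)
    (hφ : IsPolyMap φ) :
    ((finrank ℂ E : ℕ∞) : WithBot ℕ∞) ≤ zariskiDim V (projClosure (range φ)) := by
  have hpoly (U : Submodule ℂ E) : IsPolyMap (φ ∘ U.subtype) := hφ.comp (isPolyMap_linearMap _)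
  rw [← length_eq_finrank ℂ E, coe_length]
  refine Order.krullDim_le_of_strictMono (fun U : Submodule ℂ E =>
    ⟨projClosure (range (φ ∘ U.subtype)), isZariskiClosed_projClosure _, ?_, fun _ _ =>
      projClosure_range_subset_or_subset (hpoly U), projClosure_mono (range_comp_subset_range _ _)⟩)
    fun U U' hlt => ?_
  · obtain ⟨ℓ, _, hℓ, _⟩ := himm.comp_subtype U
    have hne : (φ ∘ U.subtype) 0 ≠ 0 := fun h => hℓ (by rw [h, map_zero])
    exact ⟨_, mk_mem_projClosure hne (mem_range_self _)⟩
  · have hrange : range (φ ∘ U.subtype) ⊆ range (φ ∘ U'.subtype) := by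
      rintro _ ⟨u, rfl⟩
      exact ⟨⟨u, hlt.le u.2⟩, rfl⟩
    refine ⟨projClosure_mono hrange, fun hsub => ?_⟩
    obtain ⟨M, hM⟩ := (himm.comp_subtype U').exists_isDominant (hpoly U')
    have hdom := isDominant_comp_coneMap_of_projClosure_subset (φ := φ ∘ U.subtype) hsub hM
    have := hdom.finrank_le ((isPolyMap_linearMap M).comp (hpoly U).coneMap)
    simp only [finrank_prod] at this
    exact absurd (Submodule.finrank_lt_finrank_of_lt hlt) (by omega)

end ProjectiveImmersion

section KernelSections

variable {V} {X Y : Type} [AddCommGroup X] [Module ℂ X] [AddCommGroup Y] [Module ℂ Y]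

/-- A polynomial section of the kernels of a linear family `β q` of linear maps. -/
structure IsKernelSection (β : X →ₗ[ℂ] V →ₗ[ℂ] Y) (φ : X → V) : Prop where
  isPolyMap : IsPolyMap φ
  apply_eq_zero : ∀ q, β q (φ q) = 0

theorem exists_isKernelSection_apply_ne_zero {M : Type} [AddCommGroup M] [Module ℂ M]
    [FiniteDimensional ℂ M] (β : X →ₗ[ℂ] V →ₗ[ℂ] Dual ℂ M) (hker : ∀ q, ∃ v, v ≠ 0 ∧ β q v = 0) :
    ∃ φ, IsKernelSection β φ ∧ ∃ q, φ q ≠ 0 := by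
  obtain ⟨q₁, r, hrank, hmax⟩ := exists_rank_eq_natCast_forall_rank_le β
  obtain ⟨b, c, hdet⟩ := (natCast_le_rank_iff_exists_det_ne_zero (β q₁) r).1 hrank.ge
  obtain ⟨v, hv, hβv⟩ := hker q₁
  refine ⟨fun q => cramerVector (β q) (Fin.cons v b : Fin (r + 1) → V) c, ⟨?_, fun q => ?_⟩, q₁, ?_⟩
  · exact IsPolyMap.sum _ fun i => .smul
      (Subalgebra.smul_mem _ (det_toMatrix₂Aux_mem_polyFun β _ c) _) (isPolyMap_const _)
  · ext w
    rw [apply_cramerVector]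
    exact (rank_le_natCast_iff_forall_det_eq_zero (β q) r).1 (hmax q) _ _
  · beta_reduce
    rw [cramerVector_cons_of_apply_eq_zero (β q₁) hβv]
    exact smul_ne_zero hdet hv

/-- Compare the equations for `φ (q + t • h)` and `φ q`: for `t ≠ 0` they give
`β h (φ (q + t • h)) (φ q) = 0`, and one lets `t` tend to `0`. -/
theorem IsKernelSection.apply_self_eq_zero {β : X →ₗ[ℂ] LinearMap.BilinForm ℂ V} {φ : X → V}
    (hφ : IsKernelSection β φ) (hβ : ∀ q, (β q).IsSymm) (h q : X) : β h (φ q) (φ q) = 0 := by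
  let g : ℂ → ℂ := fun t => β h (φ (q + t • h)) (φ q)
  have hg : g ∈ PolyFun ℂ := (isPolyMap_line q h).comp_mem <|
    hφ.isPolyMap.comp_mem (dual_mem_polyFun ((β h).flip (φ q)))
  have hmul (t : ℂ) : t * g t = 0 := by
    have hsymm : β q (φ (q + t • h)) (φ q) = 0 := by
      rw [(hβ q).eq, hφ.apply_eq_zero, LinearMap.zero_apply]
    simpa [hsymm, g] using LinearMap.congr_fun (hφ.apply_eq_zero (q + t • h)) (φ q)
  by_contra hne
  obtain ⟨t, hgt, ht⟩ := exists_ne_zero_and_ne_zero hg (dual_mem_polyFun LinearMap.id)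
    (x := 0) (y := 1) (by simpa [g] using hne) (by simp)
  exact mul_ne_zero ht hgt (hmul t)

theorem hasStrictFDerivAt_clm_apply_self {E F : Type*} [NormedAddCommGroup E] [NormedSpace ℂ E]
    [NormedAddCommGroup F] [NormedSpace ℂ F] {A : E → E →L[ℂ] F} {A' : E →L[ℂ] E →L[ℂ] F}
    (hA : HasStrictFDerivAt A A' 0) : HasStrictFDerivAt (fun x => A x x) (A 0) 0 :=
  (hA.clm_apply (hasStrictFDerivAt_id 0)).congr_fderiv (by ext; simp)

theorem IsKernelSection.isProjImmersionAtZero {E : Type} [NormedAddCommGroup E] [NormedSpace ℂ E]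
    [FiniteDimensional ℂ E] {β : X →ₗ[ℂ] V →ₗ[ℂ] Y} {φ : X → V} (hφ : IsKernelSection β φ) {q : X}
    (hq : φ q ≠ 0) {s : E →ₗ[ℂ] X} {ρ : Y →ₗ[ℂ] E}
    (hρ : ρ ∘ₗ β.flip (φ q) ∘ₗ s = LinearMap.id) : IsProjImmersionAtZero fun x => φ (q + s x) := by
  obtain ⟨ℓ, hℓ⟩ : ∃ ℓ : Dual ℂ V, ℓ (φ q) ≠ 0 := by
    by_contra! h
    exact hq ((forall_dual_apply_eq_zero_iff ℂ _).1 h)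
  let A : V →ₗ[ℂ] E →L[ℂ] E :=
    LinearMap.toContinuousLinearMap.toLinearMap ∘ₗ (β.flip.compl₂ s).compr₂ ρ
  have hA : IsPolyMap fun x : E => A (φ (q + s x)) :=
    (isPolyMap_linearMap A).comp
      (hφ.isPolyMap.comp ((isPolyMap_const q).add (isPolyMap_linearMap s)))
  have hderiv := hasStrictFDerivAt_clm_apply_self
    (hA.contDiff.contDiffAt.hasStrictFDerivAt one_ne_zero)
  refine ⟨ℓ, -(ρ ∘ₗ β q), by simpa using hℓ, by simp [hφ.apply_eq_zero], ?_⟩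
  have hDφ (x : E) : (-(ρ ∘ₗ β q)) (φ (q + s x)) = A (φ (q + s x)) x := by
    have hadd : β q (φ (q + s x)) + β (s x) (φ (q + s x)) = 0 := by
      simpa using hφ.apply_eq_zero (q + s x)
    simp [A, eq_neg_of_add_eq_zero_left hadd]
  simp only [hDφ]
  refine hderiv.congr_fderiv (ContinuousLinearMap.ext fun x => ?_)
  simpa [A] using LinearMap.congr_fun hρ x

theorem IsKernelSection.natCast_le_zariskiDim {β : X →ₗ[ℂ] V →ₗ[ℂ] Y} {φ : X → V}
    (hφ : IsKernelSection β φ) {q : X} (hq : φ q ≠ 0) {k : ℕ}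
    (hk : (k : Cardinal) ≤ (β.flip (φ q)).rank) :
    ((k : ℕ∞) : WithBot ℕ∞) ≤ zariskiDim V (projClosure (range φ)) := by
  obtain ⟨u, hu⟩ := (natCast_le_rank_iff_exists_linearIndependent _ k).1 hk
  let s : (Fin k → ℂ) →ₗ[ℂ] X := Fintype.linearCombination ℂ u
  have hinj : (β.flip (φ q) ∘ₗ s).ker = ⊥ := by
    rw [LinearMap.ker_eq_bot]
    convert hu.fintypeLinearCombination_injective using 2 with x
    ext; simp [s]
  obtain ⟨ρ, hρ⟩ := LinearMap.exists_leftInverse_of_injective _ hinj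
  have hdim := (hφ.isProjImmersionAtZero hq hρ).finrank_le_zariskiDim
    (hφ.isPolyMap.comp ((isPolyMap_const q).add (isPolyMap_linearMap s)))
  rw [finrank_fin_fun] at hdim
  exact hdim.trans (zariskiDim_mono (projClosure_mono (range_comp_subset_range _ φ)))

end KernelSections

section LinearSystems

variable {V}

theorem contractionRank_eq_rank (Q : Submodule ℂ (QuadraticForm ℂ V)) (v : V) :
    contractionRank V Q v = ((polarBilinHom.domRestrict Q).flip v).rank := by
  rw [LinearMap.rank, ← Submodule.span_eq (LinearMap.range _), LinearMap.coe_range]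
  rfl

theorem IsKernelSection.quadraticForm_apply_eq_zero {Q : Submodule ℂ (QuadraticForm ℂ V)}
    {φ : Q → V} (hφ : IsKernelSection (polarBilinHom.domRestrict Q) φ) (q q' : Q) :
    (q : QuadraticForm ℂ V) (φ q') = 0 := by
  have h : (q : QuadraticForm ℂ V).polarBilin (φ q') (φ q') = 0 :=
    hφ.apply_self_eq_zero (fun q => polarBilinHom_isSymm _) q q'
  simpa using h

variable [FiniteDimensional ℂ V]

theorem quadraticForm_mem_polyFun (q : QuadraticForm ℂ V) : (q : V → ℂ) ∈ PolyFun V := by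
  have hq : (q : V → ℂ) = (2⁻¹ : ℂ) • fun v => q.polarBilin v v := by
    ext v
    simp
  exact hq ▸ Subalgebra.smul_mem _ (bilin_apply_self_mem_polyFun _) _

theorem projClosure_subset_Wset {Q : Submodule ℂ (QuadraticForm ℂ V)} {S : Set V} {k : ℕ}
    (hS : ∀ v ∈ S, (∀ q ∈ Q, q v = 0) ∧ contractionRank V Q v ≤ k) :
    projClosure S ⊆ Wset V Q k := by
  intro p hp
  refine ⟨fun q hq => hp q (quadraticForm_mem_polyFun q) fun v hv t => ?_, ?_⟩
  · rw [QuadraticMap.map_smul, (hS v hv).1 q hq, smul_zero]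
  · simp only [contractionRank_eq_rank, rank_le_natCast_iff_forall_det_eq_zero] at hS ⊢
    intro u e
    refine hp _ (det_toMatrix₂Aux_mem_polyFun _ u e) fun v hv t => ?_
    rw [map_smul, map_smul, Matrix.det_smul, (hS v hv).2, mul_zero]

theorem exists_ne_zero_polarBilin_apply_eq_zero {q : QuadraticForm ℂ V}
    (hq : ¬ LinearMap.BilinForm.Nondegenerate q.polarBilin) :
    ∃ v, v ≠ 0 ∧ q.polarBilin v = 0 := by
  rw [LinearMap.BilinForm.nondegenerate_iff_ker_eq_bot] at hq
  obtain ⟨v, hv, hne⟩ := Submodule.exists_mem_ne_zero_of_ne_bot hq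
  exact ⟨v, hne, hv⟩

end LinearSystems

/-- A linear system of quadrics `Q` on a finite-dimensional complex
vector space `V` satisfying condition (*) — for every `k ≤ b := dim B`, the set `W_k`
has dimension `< k` — contains a smooth quadric. -/
theorem linear_system_contains_smooth_quadric
    [FiniteDimensional ℂ V]
    (Q : Submodule ℂ (QuadraticForm ℂ V))
    (hstar : ∀ k : ℕ, ((k : ℕ∞) : WithBot ℕ∞) ≤ zariskiDim V (baseLocus V Q) →
      zariskiDim V (Wset V Q k) < ((k : ℕ∞) : WithBot ℕ∞)) :
    ∃ q ∈ Q, LinearMap.BilinForm.Nondegenerate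
      (QuadraticMap.polarBilin (q : QuadraticForm ℂ V)) := by
  by_contra! hdeg
  obtain ⟨φ, hφ, q, hq⟩ := exists_isKernelSection_apply_ne_zero (polarBilinHom.domRestrict Q)
    fun q => exists_ne_zero_polarBilin_apply_eq_zero (hdeg q q.2)
  have : Nonempty {q // φ q ≠ 0} := ⟨q, hq⟩
  obtain ⟨⟨q₀, hq₀⟩, k, hk, hmax⟩ := exists_rank_eq_natCast_forall_rank_le
    fun q : {q // φ q ≠ 0} => (polarBilinHom.domRestrict Q).flip (φ q)
  have hrank (q : Q) : contractionRank V Q (φ q) ≤ k := by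
    rw [contractionRank_eq_rank]
    rcases eq_or_ne (φ q) 0 with h | h
    · simp [h]
    · exact hmax ⟨q, h⟩
  have hW : projClosure (range φ) ⊆ Wset V Q k := projClosure_subset_Wset <|
    forall_mem_range.2 fun q => ⟨fun q' hq' => hφ.quadraticForm_apply_eq_zero ⟨q', hq'⟩ q, hrank q⟩
  have hdim : ((k : ℕ∞) : WithBot ℕ∞) ≤ zariskiDim V (Wset V Q k) :=
    (hφ.natCast_le_zariskiDim hq₀ hk.ge).trans (zariskiDim_mono hW)
  exact (hstar k (hdim.trans (zariskiDim_mono (sep_subset _ _)))).not_ge hdim
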